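/- Let G^i be a spray with coefficients N^i_j, let F̃ be a Finsler structure on U with metric tensor g̃_{ij}, and let P : Ω → ℝ be a fixed smooth, positively 1-homogeneous function. Then S(∂F̃²/∂y^i) − ∂F̃²/∂x^i = 2P ∂F̃²/∂y^i holds on Ω for all i if and only if the Levi-Civita equations hold on Ω for all i, j: ∇g̃_{ij} = 2P g̃_{ij} + (∂P/∂y^i) Σ_k g̃_{kj} y^k + (∂P/∂y^j) Σ_k g̃_{ik} y^k, where ∇g̃_{ij} = S(g̃_{ij}) − Σ_k (N^k_i g̃_{kj} + N^k_j g̃_{ik}). -/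

import Mathlib

noncomputable section

/-- A point `(x, y)` of the tangent space coordinates over `ℝⁿ`. -/
abbrev Pt (n : ℕ) : Type := (Fin n → ℝ) × (Fin n → ℝ)

/-- `Ω = U × (ℝⁿ \ {0})`. -/
def OmegaSet {n : ℕ} (U : Set (Fin n → ℝ)) : Set (Pt n) :=
  {p : Pt n | p.1 ∈ U ∧ p.2 ≠ 0}

/-- Partial derivative `∂f/∂x^i`. -/
def pdx {n : ℕ} (f : Pt n → ℝ) (i : Fin n) (p : Pt n) : ℝ :=
  fderiv ℝ f p (Pi.single i 1, 0)

/-- Partial derivative `∂f/∂y^i`. -/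
def pdy {n : ℕ} (f : Pt n → ℝ) (i : Fin n) (p : Pt n) : ℝ :=
  fderiv ℝ f p (0, Pi.single i 1)

/-- Second fibre derivative `∂²f/∂y^i∂y^j`. -/
def pdyy {n : ℕ} (f : Pt n → ℝ) (i j : Fin n) : Pt n → ℝ :=
  pdy (pdy f j) i

/-- The spray vector field applied to a function:
`S(f) = Σ_k (y^k ∂f/∂x^k − 2 G^k ∂f/∂y^k)`. -/
def Sop {n : ℕ} (G : Fin n → Pt n → ℝ) (f : Pt n → ℝ) (p : Pt n) : ℝ :=
  ∑ k, (p.2 k * pdx f k p - 2 * G k p * pdy f k p)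

/-- Connection coefficients `N^i_j = ∂G^i/∂y^j`. -/
def Ncoef {n : ℕ} (G : Fin n → Pt n → ℝ) (i j : Fin n) : Pt n → ℝ :=
  pdy (G i) j

/-- Horizontal derivative `δf/δx^i = ∂f/∂x^i − Σ_j N^j_i ∂f/∂y^j`. -/
def deltax {n : ℕ} (G : Fin n → Pt n → ℝ) (f : Pt n → ℝ) (i : Fin n) (p : Pt n) : ℝ :=
  pdx f i p - ∑ j, Ncoef G j i p * pdy f j p

/-- Dynamical covariant derivative of a `(0,2)` family:
`∇T_{ij} = S(T_{ij}) − Σ_k (N^k_i T_{kj} + N^k_j T_{ik})`. -/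
def nablaT {n : ℕ} (G : Fin n → Pt n → ℝ) (T : Fin n → Fin n → Pt n → ℝ)
    (i j : Fin n) (p : Pt n) : ℝ :=
  Sop G (T i j) p - ∑ k, (Ncoef G k i p * T k j p + Ncoef G k j p * T i k p)

/-- `f` is positively `k`-homogeneous in the fibre variable `y`, on `Ω`. -/
def PosHomog {n : ℕ} (U : Set (Fin n → ℝ)) (k : ℤ) (f : Pt n → ℝ) : Prop :=
  ∀ L : ℝ, 0 < L → ∀ p ∈ OmegaSet U, f (p.1, L • p.2) = L ^ k * f p

/-- A spray: smooth, positively 2-homogeneous coefficients `G^i`. -/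
def IsSpray {n : ℕ} (U : Set (Fin n → ℝ)) (G : Fin n → Pt n → ℝ) : Prop :=
  ∀ i, ContDiffOn ℝ (⊤ : ℕ∞) (G i) (OmegaSet U) ∧ PosHomog U 2 (G i)

/-- Components of the Euler-Lagrange 1-form: `(δ_S f)_i = S(∂f/∂y^i) − ∂f/∂x^i`. -/
def EL {n : ℕ} (G : Fin n → Pt n → ℝ) (f : Pt n → ℝ) (i : Fin n) (p : Pt n) : ℝ :=
  Sop G (pdy f i) p - pdx f i p

/-- The metric tensor `g_{ij} = ½ ∂²(F²)/∂y^i∂y^j` of a Finsler function. -/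
def metricTensor {n : ℕ} (F : Pt n → ℝ) (i j : Fin n) (p : Pt n) : ℝ :=
  (1 / 2) * pdyy (fun q => F q ^ 2) i j p

/-- A Finsler structure on `U`: smooth, positive, positively 1-homogeneous,
with invertible metric tensor at every point of `Ω`. -/
def IsFinsler {n : ℕ} (U : Set (Fin n → ℝ)) (F : Pt n → ℝ) : Prop :=
  ContDiffOn ℝ (⊤ : ℕ∞) F (OmegaSet U) ∧ (∀ p ∈ OmegaSet U, 0 < F p) ∧ PosHomog U 1 F ∧
    ∀ p ∈ OmegaSet U, IsUnit (Matrix.of (fun i j => metricTensor F i j p))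

theorem omega_open {n : ℕ} {U : Set (Fin n → ℝ)} (hU : IsOpen U) : IsOpen (OmegaSet U) := by
  have h : OmegaSet U = U ×ˢ ({0}ᶜ : Set (Fin n → ℝ)) := by
    ext p; simp [OmegaSet]
  rw [h]
  exact hU.prod isOpen_compl_singleton

theorem sm_fderiv {n : ℕ} {U : Set (Fin n → ℝ)} (hU : IsOpen U) {f : Pt n → ℝ}
    (hf : ContDiffOn ℝ (⊤ : ℕ∞) f (OmegaSet U)) (v : Pt n) :
    ContDiffOn ℝ (⊤ : ℕ∞) (fun p => fderiv ℝ f p v) (OmegaSet U) := by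
  have h := hf.fderiv_of_isOpen (m := (⊤ : ℕ∞)) (omega_open hU) (by simp)
  exact h.clm_apply contDiffOn_const

theorem sm_pdy {n : ℕ} {U : Set (Fin n → ℝ)} (hU : IsOpen U) {f : Pt n → ℝ}
    (hf : ContDiffOn ℝ (⊤ : ℕ∞) f (OmegaSet U)) (i : Fin n) :
    ContDiffOn ℝ (⊤ : ℕ∞) (pdy f i) (OmegaSet U) := sm_fderiv hU hf _

theorem sm_pdx {n : ℕ} {U : Set (Fin n → ℝ)} (hU : IsOpen U) {f : Pt n → ℝ}
    (hf : ContDiffOn ℝ (⊤ : ℕ∞) f (OmegaSet U)) (i : Fin n) :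
    ContDiffOn ℝ (⊤ : ℕ∞) (pdx f i) (OmegaSet U) := sm_fderiv hU hf _

theorem sm_y {n : ℕ} {U : Set (Fin n → ℝ)} (k : Fin n) :
    ContDiffOn ℝ (⊤ : ℕ∞) (fun p : Pt n => p.2 k) (OmegaSet U) := by
  fun_prop

theorem sm_Sop {n : ℕ} {U : Set (Fin n → ℝ)} (hU : IsOpen U) {G : Fin n → Pt n → ℝ}
    (hG : IsSpray U G) {f : Pt n → ℝ}
    (hf : ContDiffOn ℝ (⊤ : ℕ∞) f (OmegaSet U)) :
    ContDiffOn ℝ (⊤ : ℕ∞) (Sop G f) (OmegaSet U) := by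
  unfold Sop
  exact ContDiffOn.sum fun k _ => ((sm_y k).mul (sm_pdx hU hf k)).sub
    ((contDiffOn_const.mul (hG k).1).mul (sm_pdy hU hf k))

theorem sm_diff {n : ℕ} {U : Set (Fin n → ℝ)} (hU : IsOpen U) {f : Pt n → ℝ}
    (hf : ContDiffOn ℝ (⊤ : ℕ∞) f (OmegaSet U)) {p : Pt n} (hp : p ∈ OmegaSet U) :
    DifferentiableAt ℝ f p :=
  (hf.contDiffAt ((omega_open hU).mem_nhds hp)).differentiableAt (by simp)

theorem fd_comm {n : ℕ} {U : Set (Fin n → ℝ)} (hU : IsOpen U) {f : Pt n → ℝ}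
    (hf : ContDiffOn ℝ (⊤ : ℕ∞) f (OmegaSet U)) {p : Pt n} (hp : p ∈ OmegaSet U) (v w : Pt n) :
    fderiv ℝ (fun q => fderiv ℝ f q v) p w = fderiv ℝ (fun q => fderiv ℝ f q w) p v := by
  have hc := hf.contDiffAt ((omega_open hU).mem_nhds hp)
  have hs : IsSymmSndFDerivAt ℝ f p := hc.isSymmSndFDerivAt (by
    rw [minSmoothness_of_isRCLikeNormedField]; exact WithTop.coe_le_coe.2 le_top)
  have hd : DifferentiableAt ℝ (fderiv ℝ f) p :=
    (hc.fderiv_right (m := (⊤ : ℕ∞)) (by simp)).differentiableAt (by simp)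
  rw [fderiv_clm_apply hd (differentiableAt_const _), fderiv_clm_apply hd (differentiableAt_const _)]
  simpa using hs w v

theorem pdy_comm {n : ℕ} {U : Set (Fin n → ℝ)} (hU : IsOpen U) {f : Pt n → ℝ}
    (hf : ContDiffOn ℝ (⊤ : ℕ∞) f (OmegaSet U)) {p : Pt n} (hp : p ∈ OmegaSet U) (i j : Fin n) :
    pdy (pdy f i) j p = pdy (pdy f j) i p := fd_comm hU hf hp _ _

theorem pdxy_comm {n : ℕ} {U : Set (Fin n → ℝ)} (hU : IsOpen U) {f : Pt n → ℝ}
    (hf : ContDiffOn ℝ (⊤ : ℕ∞) f (OmegaSet U)) {p : Pt n} (hp : p ∈ OmegaSet U) (i j : Fin n) :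
    pdy (pdx f i) j p = pdx (pdy f j) i p := fd_comm hU hf hp _ _

theorem pdy_mul {n : ℕ} {f g : Pt n → ℝ} {p : Pt n} (hf : DifferentiableAt ℝ f p)
    (hg : DifferentiableAt ℝ g p) (j : Fin n) :
    pdy (fun q => f q * g q) j p = f p * pdy g j p + pdy f j p * g p := by
  unfold pdy
  rw [fderiv_fun_mul hf hg]
  simp; ring

theorem pdy_sub {n : ℕ} {f g : Pt n → ℝ} {p : Pt n} (hf : DifferentiableAt ℝ f p)
    (hg : DifferentiableAt ℝ g p) (j : Fin n) :
    pdy (fun q => f q - g q) j p = pdy f j p - pdy g j p := by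
  unfold pdy
  rw [fderiv_fun_sub hf hg]
  simp

theorem pdy_cmul {n : ℕ} {f : Pt n → ℝ} {p : Pt n} (hf : DifferentiableAt ℝ f p) (c : ℝ)
    (j : Fin n) :
    pdy (fun q => c * f q) j p = c * pdy f j p := by
  unfold pdy
  rw [fderiv_const_mul hf]
  simp

theorem pdx_cmul {n : ℕ} {f : Pt n → ℝ} {p : Pt n} (hf : DifferentiableAt ℝ f p) (c : ℝ)
    (j : Fin n) :
    pdx (fun q => c * f q) j p = c * pdx f j p := by
  unfold pdx
  rw [fderiv_const_mul hf]
  simp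

theorem pdy_sum {n : ℕ} {f : Fin n → Pt n → ℝ} {p : Pt n} (hf : ∀ k, DifferentiableAt ℝ (f k) p)
    (j : Fin n) :
    pdy (fun q => ∑ k, f k q) j p = ∑ k, pdy (f k) j p := by
  unfold pdy
  rw [fderiv_fun_sum (fun k _ => hf k)]
  simp

theorem pdy_y {n : ℕ} (p : Pt n) (k j : Fin n) :
    pdy (fun q : Pt n => q.2 k) j p = if k = j then 1 else 0 := by
  unfold pdy
  have h : (fun q : Pt n => q.2 k) = ((ContinuousLinearMap.proj k).comp
    (ContinuousLinearMap.snd ℝ (Fin n → ℝ) (Fin n → ℝ)) : Pt n →L[ℝ] ℝ) := by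
    ext q; simp
  rw [h, ContinuousLinearMap.fderiv]
  simp [Pi.single_apply]

theorem pdy_Sop {n : ℕ} {U : Set (Fin n → ℝ)} (hU : IsOpen U) {G : Fin n → Pt n → ℝ}
    (hG : IsSpray U G) {f : Pt n → ℝ}
    (hf : ContDiffOn ℝ (⊤ : ℕ∞) f (OmegaSet U)) {p : Pt n} (hp : p ∈ OmegaSet U) (j : Fin n) :
    pdy (Sop G f) j p
      = Sop G (pdy f j) p + pdx f j p - 2 * ∑ k, Ncoef G k j p * pdy f k p := by
  have dy : ∀ k, DifferentiableAt ℝ (fun p : Pt n => p.2 k) p := fun k => sm_diff hU (sm_y k) hp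
  have dG : ∀ k, DifferentiableAt ℝ (G k) p := fun k => sm_diff hU (hG k).1 hp
  have dfx : ∀ k, DifferentiableAt ℝ (pdx f k) p := fun k => sm_diff hU (sm_pdx hU hf k) hp
  have dfy : ∀ k, DifferentiableAt ℝ (pdy f k) p := fun k => sm_diff hU (sm_pdy hU hf k) hp
  have d2G : ∀ k, DifferentiableAt ℝ (fun q => 2 * G k q) p := fun k => (dG k).const_mul 2
  have h1 : pdy (Sop G f) j p = ∑ k, ((p.2 k * pdx (pdy f j) k p + (if k = j then 1 else 0) * pdx f k p)
      - (2 * G k p * pdy (pdy f j) k p + 2 * Ncoef G k j p * pdy f k p)) := by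
    have : Sop G f = fun q => ∑ k, (q.2 k * pdx f k q - 2 * G k q * pdy f k q) := rfl
    rw [this, pdy_sum (fun k => ((dy k).fun_mul (dfx k)).fun_sub ((d2G k).fun_mul (dfy k)))]
    refine Finset.sum_congr rfl fun k _ => ?_
    rw [pdy_sub ((dy k).fun_mul (dfx k)) ((d2G k).fun_mul (dfy k)), pdy_mul (dy k) (dfx k),
      pdy_mul (d2G k) (dfy k), pdy_cmul (dG k), pdy_y, pdxy_comm hU hf hp, pdy_comm hU hf hp k j]
    rfl
  have h2 : ∑ k, (if k = j then (1:ℝ) else 0) * pdx f k p = pdx f j p := by simp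
  rw [h1, ← h2]
  unfold Sop
  rw [Finset.mul_sum, ← Finset.sum_add_distrib, ← Finset.sum_sub_distrib]
  exact Finset.sum_congr rfl fun k _ => by ring

/-- fibre scaling -/
def scl {n : ℕ} (L : ℝ) (hL : L ≠ 0) : Pt n ≃L[ℝ] Pt n :=
  (ContinuousLinearEquiv.refl ℝ (Fin n → ℝ)).prodCongr
    (ContinuousLinearEquiv.smulLeft (Units.mk0 L hL))

theorem scl_apply {n : ℕ} (L : ℝ) (hL : L ≠ 0) (p : Pt n) : scl L hL p = (p.1, L • p.2) := rfl

theorem hom_fd {n : ℕ} {U : Set (Fin n → ℝ)} (hU : IsOpen U) {f : Pt n → ℝ} {k : ℤ}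
    (hf : PosHomog U k f) {L : ℝ} (hL : 0 < L) {p : Pt n} (hp : p ∈ OmegaSet U) (v : Pt n) :
    fderiv ℝ f (p.1, L • p.2) (v.1, L • v.2) = L ^ k * fderiv ℝ f p v := by
  have h1 : fderiv ℝ (f ∘ scl L hL.ne') p v
      = fderiv ℝ f (p.1, L • p.2) (v.1, L • v.2) := by
    rw [ContinuousLinearEquiv.comp_right_fderiv]; rfl
  have h2 : (f ∘ scl L hL.ne') =ᶠ[nhds p] (L ^ k) • f := by
    filter_upwards [(omega_open hU).mem_nhds hp] with q hq
    simp only [Function.comp, scl_apply, Pi.smul_apply, smul_eq_mul]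
    exact hf L hL q hq
  rw [← h1, h2.fderiv_eq, fderiv_const_smul_field]
  simp

theorem hom_pdx {n : ℕ} {U : Set (Fin n → ℝ)} (hU : IsOpen U) {f : Pt n → ℝ} {k : ℤ}
    (hf : PosHomog U k f) (i : Fin n) : PosHomog U k (pdx f i) := by
  intro L hL p hp
  have := hom_fd hU hf hL hp (Pi.single i 1, 0)
  simpa [pdx] using this

theorem hom_pdy {n : ℕ} {U : Set (Fin n → ℝ)} (hU : IsOpen U) {f : Pt n → ℝ} {k : ℤ}
    (hf : PosHomog U (k + 1) f) (i : Fin n) : PosHomog U k (pdy f i) := by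
  intro L hL p hp
  have h := hom_fd hU hf hL hp (0, Pi.single i 1)
  have e : (((0 : Fin n → ℝ), L • (Pi.single i 1 : Fin n → ℝ)) : Pt n)
      = L • ((0 : Fin n → ℝ), (Pi.single i 1 : Fin n → ℝ)) := by simp
  simp only at h
  rw [e, map_smul, zpow_add_one₀ hL.ne', smul_eq_mul] at h
  have : L * pdy f i (p.1, L • p.2) = L * (L ^ k * pdy f i p) := by
    unfold pdy; rw [h]; ring
  exact mul_left_cancel₀ hL.ne' this

theorem hom_Sop {n : ℕ} {U : Set (Fin n → ℝ)} (hU : IsOpen U) {G : Fin n → Pt n → ℝ}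
    (hG : IsSpray U G) {f : Pt n → ℝ} {k : ℤ}
    (hf : PosHomog U (k + 1) f) : PosHomog U (k + 2) (Sop G f) := by
  intro L hL p hp
  unfold Sop
  rw [Finset.mul_sum]
  refine Finset.sum_congr rfl fun i _ => ?_
  rw [hom_pdx hU hf i L hL p hp, hom_pdy hU hf i L hL p hp, (hG i).2 L hL p hp,
    zpow_add₀ hL.ne', zpow_add₀ hL.ne']
  simp only [Pi.smul_apply, smul_eq_mul, zpow_one]
  norm_cast
  ring

theorem fd_y {n : ℕ} (f : Pt n → ℝ) (p : Pt n) (y : Fin n → ℝ) :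
    fderiv ℝ f p (0, y) = ∑ k, y k * pdy f k p := by
  have : ((0, y) : Pt n) = ∑ k, y k • ((0 : Fin n → ℝ), (Pi.single k 1 : Fin n → ℝ)) := by
    ext i
    · simp [Prod.fst_sum]
    · simp [Prod.snd_sum, Pi.single_apply]
  rw [this, map_sum]
  exact Finset.sum_congr rfl fun k _ => by rw [map_smul]; rfl

theorem euler {n : ℕ} {U : Set (Fin n → ℝ)} (hU : IsOpen U) {f : Pt n → ℝ} {k : ℤ}
    (hs : ContDiffOn ℝ (⊤ : ℕ∞) f (OmegaSet U))
    (hf : PosHomog U k f) {p : Pt n} (hp : p ∈ OmegaSet U) :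
    ∑ j, p.2 j * pdy f j p = k * f p := by
  rw [← fd_y]
  have hc : HasDerivAt (fun L : ℝ => ((p.1, L • p.2) : Pt n)) (0, p.2) 1 := by
    have := (hasDerivAt_id (1:ℝ)).smul_const p.2
    simpa using (hasDerivAt_const (1:ℝ) p.1).prodMk this
  have hfd : HasFDerivAt f (fderiv ℝ f p) ((p.1, (1:ℝ) • p.2) : Pt n) := by
    simpa using (sm_diff hU hs hp).hasFDerivAt
  have h1 := hfd.comp_hasDerivAt (1:ℝ) hc
  have h2 : HasDerivAt (fun L : ℝ => L ^ k * f p) (k * f p) 1 := by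
    simpa using (hasDerivAt_zpow k (1:ℝ) (by simp)).mul_const (f p)
  have h3 : (f ∘ fun L : ℝ => ((p.1, L • p.2) : Pt n)) =ᶠ[nhds 1] fun L : ℝ => L ^ k * f p := by
    filter_upwards [lt_mem_nhds (zero_lt_one' ℝ)] with L hL
    exact hf L hL p hp
  exact h1.unique (h2.congr_of_eventuallyEq h3)

theorem pdy_zero {n : ℕ} {U : Set (Fin n → ℝ)} (hU : IsOpen U) {f : Pt n → ℝ}
    (hf : ∀ p ∈ OmegaSet U, f p = 0) {p : Pt n} (hp : p ∈ OmegaSet U) (i : Fin n) :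
    pdy f i p = 0 := by
  have h : f =ᶠ[nhds p] fun _ => (0:ℝ) := by
    filter_upwards [(omega_open hU).mem_nhds hp] with q hq
    exact hf q hq
  unfold pdy
  rw [h.fderiv_eq]; simp

/-- the defect one-form -/
def Tdef {n : ℕ} (G : Fin n → Pt n → ℝ) (E P : Pt n → ℝ) (i : Fin n) (p : Pt n) : ℝ :=
  (Sop G (pdy E i) p - pdx E i p) - 2 * (P p * pdy E i p)

theorem sm_T {n : ℕ} {U : Set (Fin n → ℝ)} (hU : IsOpen U) {G : Fin n → Pt n → ℝ}
    (hG : IsSpray U G) {E P : Pt n → ℝ} (hE : ContDiffOn ℝ (⊤ : ℕ∞) E (OmegaSet U))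
    (hP : ContDiffOn ℝ (⊤ : ℕ∞) P (OmegaSet U)) (i : Fin n) :
    ContDiffOn ℝ (⊤ : ℕ∞) (Tdef G E P i) (OmegaSet U) :=
  ((sm_Sop hU hG (sm_pdy hU hE i)).sub (sm_pdx hU hE i)).sub
    (contDiffOn_const.mul (hP.mul (sm_pdy hU hE i)))

theorem hom_T {n : ℕ} {U : Set (Fin n → ℝ)} (hU : IsOpen U) {G : Fin n → Pt n → ℝ}
    (hG : IsSpray U G) {E P : Pt n → ℝ} (hE : PosHomog U 2 E)
    (hP : PosHomog U 1 P) (i : Fin n) : PosHomog U 2 (Tdef G E P i) := by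
  intro L hL p hp
  have h1 : PosHomog U (0 + 1) (pdy E i) := hom_pdy hU (by simpa using hE) i
  have h2 := hom_Sop hU hG h1 L hL p hp
  have h3 := h1 L hL p hp
  unfold Tdef
  rw [h2, h3, hom_pdx hU hE i L hL p hp, hP L hL p hp]
  simp only [zero_add, zpow_one]
  norm_cast
  ring

theorem pdy_T {n : ℕ} {U : Set (Fin n → ℝ)} (hU : IsOpen U) {G : Fin n → Pt n → ℝ}
    (hG : IsSpray U G) {E P : Pt n → ℝ} (hE : ContDiffOn ℝ (⊤ : ℕ∞) E (OmegaSet U))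
    (hP : ContDiffOn ℝ (⊤ : ℕ∞) P (OmegaSet U)) (i j : Fin n) {p : Pt n} (hp : p ∈ OmegaSet U) :
    pdy (Tdef G E P i) j p
      = Sop G (pdy (pdy E i) j) p + pdx (pdy E i) j p
        - 2 * ∑ k, Ncoef G k j p * pdy (pdy E i) k p - pdx (pdy E j) i p
        - 2 * (P p * pdy (pdy E i) j p + pdy P j p * pdy E i p) := by
  have dE := sm_diff hU (sm_pdy hU hE i) hp
  have dS := sm_diff hU (sm_Sop hU hG (sm_pdy hU hE i)) hp
  have dx := sm_diff hU (sm_pdx hU hE i) hp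
  have dP := sm_diff hU hP hp
  have : Tdef G E P i = fun p => (Sop G (pdy E i) p - pdx E i p) - 2 * (P p * pdy E i p) := rfl
  rw [this, pdy_sub (dS.fun_sub dx) ((dP.fun_mul dE).const_mul 2), pdy_sub dS dx,
    pdy_cmul (dP.fun_mul dE), pdy_mul dP dE, pdy_Sop hU hG (sm_pdy hU hE i) hp,
    pdxy_comm hU hE hp]

theorem Sop_congr {n : ℕ} {U : Set (Fin n → ℝ)} (hU : IsOpen U) (G : Fin n → Pt n → ℝ)
    {f g : Pt n → ℝ} (h : ∀ p ∈ OmegaSet U, f p = g p) {p : Pt n} (hp : p ∈ OmegaSet U) :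
    Sop G f p = Sop G g p := by
  have h : f =ᶠ[nhds p] g := by
    filter_upwards [(omega_open hU).mem_nhds hp] with q hq
    exact h q hq
  unfold Sop pdx pdy
  rw [h.fderiv_eq]

theorem Sop_cmul {n : ℕ} (G : Fin n → Pt n → ℝ)
    {f : Pt n → ℝ} {p : Pt n} (hf : DifferentiableAt ℝ f p) (c : ℝ) :
    Sop G (fun q => c * f q) p = c * Sop G f p := by
  unfold Sop
  rw [Finset.mul_sum]
  refine Finset.sum_congr rfl fun k _ => ?_
  rw [pdx_cmul hf, pdy_cmul hf]; ring

/-- the Levi-Civita defect is the symmetrized fibre derivative of `Tdef` -/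
theorem LC_eq {n : ℕ} {U : Set (Fin n → ℝ)} (hU : IsOpen U) {G : Fin n → Pt n → ℝ}
    (hG : IsSpray U G) {F P : Pt n → ℝ}
    (hE : ContDiffOn ℝ (⊤ : ℕ∞) (fun q => F q ^ 2) (OmegaSet U))
    (hEh : PosHomog U 2 (fun q => F q ^ 2))
    (hP : ContDiffOn ℝ (⊤ : ℕ∞) P (OmegaSet U)) (i j : Fin n) {p : Pt n} (hp : p ∈ OmegaSet U) :
    pdy (Tdef G (fun q => F q ^ 2) P i) j p + pdy (Tdef G (fun q => F q ^ 2) P j) i p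
      = 4 * (nablaT G (metricTensor F) i j p
          - (2 * P p * metricTensor F i j p
            + pdy P i p * ∑ k, metricTensor F k j p * p.2 k
            + pdy P j p * ∑ k, metricTensor F i k p * p.2 k)) := by
  rw [pdy_T hU hG hE hP i j hp, pdy_T hU hG hE hP j i hp]
  unfold nablaT metricTensor pdyy
  set E : Pt n → ℝ := fun q => F q ^ 2
  have hom1 : ∀ l, PosHomog U 1 (pdy E l) := fun l => hom_pdy hU (by simpa using hEh) l
  have e1 : ∑ k, 1 / 2 * pdy (pdy E j) k p * p.2 k = 1 / 2 * pdy E j p := by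
    have := euler hU (sm_pdy hU hE j) (hom1 j) hp
    rw [show pdy E j p = ((1:ℤ):ℝ) * pdy E j p by simp, ← this, Finset.mul_sum]
    exact Finset.sum_congr rfl fun k _ => by ring
  have e2 : ∑ k, 1 / 2 * pdy (pdy E k) i p * p.2 k = 1 / 2 * pdy E i p := by
    have := euler hU (sm_pdy hU hE i) (hom1 i) hp
    rw [show pdy E i p = ((1:ℤ):ℝ) * pdy E i p by simp, ← this, Finset.mul_sum]
    exact Finset.sum_congr rfl fun k _ => by rw [pdy_comm hU hE hp k i]; ring
  have e3 : Sop G (pdy (pdy E i) j) p = Sop G (pdy (pdy E j) i) p :=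
    Sop_congr hU G (fun q hq => pdy_comm hU hE hq i j) hp
  have e4 : Sop G (fun p => 1 / 2 * pdy (pdy E j) i p) p = 1 / 2 * Sop G (pdy (pdy E j) i) p :=
    Sop_cmul G (sm_diff hU (sm_pdy hU (sm_pdy hU hE j) i) hp) _
  have e5 : ∑ k, (Ncoef G k i p * (1 / 2 * pdy (pdy E j) k p)
        + Ncoef G k j p * (1 / 2 * pdy (pdy E k) i p))
      = 1 / 2 * ∑ k, Ncoef G k i p * pdy (pdy E j) k p
        + 1 / 2 * ∑ k, Ncoef G k j p * pdy (pdy E i) k p := by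
    rw [Finset.mul_sum, Finset.mul_sum, ← Finset.sum_add_distrib]
    exact Finset.sum_congr rfl fun k _ => by rw [pdy_comm hU hE hp k i]; ring
  have e6 := pdy_comm hU hE hp i j
  change _ = 4 * (Sop G (fun p => 1 / 2 * pdy (pdy E j) i p) p - _ - _)
  rw [e1, e2, e3, e4, e5, e6]
  ring


/-- for a fixed 1-homogeneous `P`, `δ_S F̃² = 2P d_J F̃²` holds on `Ω`
iff the Levi-Civita equations hold on `Ω`. -/
theorem statement6 {n : ℕ} (hn : 1 ≤ n) (U : Set (Fin n → ℝ)) (hU : IsOpen U)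
    (G : Fin n → Pt n → ℝ) (hG : IsSpray U G)
    (Ft : Pt n → ℝ) (hFt : IsFinsler U Ft)
    (P : Pt n → ℝ) (hP : ContDiffOn ℝ (⊤ : ℕ∞) P (OmegaSet U)) (hPh : PosHomog U 1 P) :
    (∀ i, ∀ p ∈ OmegaSet U,
        EL G (fun q => Ft q ^ 2) i p = 2 * P p * pdy (fun q => Ft q ^ 2) i p) ↔
      (∀ i j, ∀ p ∈ OmegaSet U,
        nablaT G (metricTensor Ft) i j p
          = 2 * P p * metricTensor Ft i j p
            + pdy P i p * ∑ k, metricTensor Ft k j p * p.2 k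
            + pdy P j p * ∑ k, metricTensor Ft i k p * p.2 k) := by
  obtain ⟨hFs, -, hFh, -⟩ := hFt
  have hE : ContDiffOn ℝ (⊤ : ℕ∞) (fun q => Ft q ^ 2) (OmegaSet U) := hFs.pow 2
  have hEh : PosHomog U 2 (fun q => Ft q ^ 2) := by
    intro L hL p hp
    simp only [hFh L hL p hp, zpow_one]
    norm_cast
    ring
  have hLC := fun (i j : Fin n) (p : Pt n) (hp : p ∈ OmegaSet U) => LC_eq hU hG hE hEh hP i j hp
  set T := Tdef G (fun q => Ft q ^ 2) P with hT
  have hTE : ∀ i p, T i p = EL G (fun q => Ft q ^ 2) i p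
      - 2 * P p * pdy (fun q => Ft q ^ 2) i p := by
    intro i p
    simp only [hT, Tdef, EL]; ring
  have hTs : ∀ i, ContDiffOn ℝ (⊤ : ℕ∞) (T i) (OmegaSet U) := fun i => sm_T hU hG hE hP i
  have hTh : ∀ i, PosHomog U 2 (T i) := fun i => hom_T hU hG hEh hPh i
  constructor
  · intro h i j p hp
    have h0 : ∀ i, ∀ q ∈ OmegaSet U, T i q = 0 := fun i q hq => by
      rw [hTE, h i q hq, sub_self]
    have := hLC i j p hp
    rw [pdy_zero hU (h0 i) hp, pdy_zero hU (h0 j) hp] at this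
    linarith
  · intro h
    have hs : ∀ i j, ∀ p ∈ OmegaSet U, pdy (T i) j p + pdy (T j) i p = 0 := by
      intro i j p hp
      rw [hLC i j p hp, h i j p hp]; ring
    have he : ∀ i, ∀ p ∈ OmegaSet U, ∑ j, p.2 j * pdy (T i) j p = 2 * T i p := by
      intro i p hp
      simpa using euler hU (hTs i) (hTh i) hp
    have he' : ∀ i, ∀ p ∈ OmegaSet U, ∑ j, p.2 j * pdy (T j) i p = - (2 * T i p) := by
      intro i p hp
      rw [← he i p hp, ← Finset.sum_neg_distrib]
      exact Finset.sum_congr rfl fun j _ => by linear_combination p.2 j * hs i j p hp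
    have ht : ∀ p ∈ OmegaSet U, ∑ i, p.2 i * T i p = 0 := by
      intro p hp
      have h1 : ∑ i, p.2 i * (2 * T i p) = ∑ i, p.2 i * (-(2 * T i p)) := by
        calc ∑ i, p.2 i * (2 * T i p) = ∑ i, ∑ j, p.2 i * (p.2 j * pdy (T i) j p) := by
              simp only [← Finset.mul_sum]
              exact Finset.sum_congr rfl fun i _ => by rw [he i p hp]
          _ = ∑ j, ∑ i, p.2 i * (p.2 j * pdy (T i) j p) := Finset.sum_comm
          _ = ∑ j, p.2 j * (-(2 * T j p)) := by
              refine Finset.sum_congr rfl fun j _ => ?_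
              rw [← he' j p hp, Finset.mul_sum]
              exact Finset.sum_congr rfl fun i _ => by ring
      have h2 : ∑ i, p.2 i * (2 * T i p) = 2 * ∑ i, p.2 i * T i p := by
        rw [Finset.mul_sum]; exact Finset.sum_congr rfl fun i _ => by ring
      have h3 : ∑ i, p.2 i * (-(2 * T i p)) = -2 * ∑ i, p.2 i * T i p := by
        rw [Finset.mul_sum]; exact Finset.sum_congr rfl fun i _ => by ring
      linarith
    intro i p hp
    have h0 := pdy_zero hU ht hp i
    have dy : ∀ k, DifferentiableAt ℝ (fun p : Pt n => p.2 k) p := fun k => sm_diff hU (sm_y k) hp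
    have dT : ∀ k, DifferentiableAt ℝ (T k) p := fun k => sm_diff hU (hTs k) hp
    rw [pdy_sum (fun k => (dy k).fun_mul (dT k))] at h0
    have h1 : ∑ k, pdy (fun q => q.2 k * T k q) i p
        = ∑ k, p.2 k * pdy (T k) i p + T i p := by
      have : T i p = ∑ k, (if k = i then (1:ℝ) else 0) * T k p := by simp
      rw [this, ← Finset.sum_add_distrib]
      exact Finset.sum_congr rfl fun k _ => by rw [pdy_mul (dy k) (dT k), pdy_y]
    have h2 := h1.symm.trans h0
    rw [he' i p hp] at h2
    have h3 := hTE i p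
    linarith
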